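/- arXiv:math/0512456 — 4 statements merged into one kernel-verified Lean document; each statement's English description precedes it below -/
import Mathlib

section
/- Let I ⊆ A = K[x_1,…,x_n] be a nonzero monomial ideal with ext(I) = {a_1,…,a_r}, and set J = (x^{a_1},…,x^{a_r}). Then (i) J is a reduction ideal of I, i.e. there exists m ≥ 1 with J·I^{m−1} = I^m, and (ii) every monomial reduction ideal L of I contains J. Consequently J is the unique minimal monomial reduction ideal of I. -/
open MvPolynomial Pointwise

attribute [local instance] Classical.propDecidable

noncomputable section

/-- The real exponent vector of a monomial exponent `a : Fin n →₀ ℕ`. -/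
def expVec {n : ℕ} (a : Fin n →₀ ℕ) : Fin n → ℝ := fun i => (a i : ℝ)

/-- The standard inner product on `ℝ^n`. -/
def dotR {n : ℕ} (u v : Fin n → ℝ) : ℝ := ∑ i, u i * v i

/-- A monomial ideal: an ideal generated by a set of monomials. -/
def IsMonomialIdeal {K : Type*} [Field K] {n : ℕ} (I : Ideal (MvPolynomial (Fin n) K)) : Prop :=
  ∃ S : Set (Fin n →₀ ℕ), I = Ideal.span ((fun a => (monomial a (1 : K))) '' S)

/-- The Newton polyhedron of an ideal: the convex hull of the exponent vectors of the
monomials belonging to the ideal. -/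
def newtonPolyhedron {K : Type*} [Field K] {n : ℕ} (I : Ideal (MvPolynomial (Fin n) K)) :
    Set (Fin n → ℝ) :=
  convexHull ℝ {v | ∃ a : Fin n →₀ ℕ, monomial a (1 : K) ∈ I ∧ v = expVec a}

/-- The hyperplane `{v : ⟨u,v⟩ = c}` is a supporting hyperplane of `C`:
`C ⊆ {v : ⟨u,v⟩ ≥ c}` and the hyperplane meets `C`. -/
def IsSupp {n : ℕ} (C : Set (Fin n → ℝ)) (u : Fin n → ℝ) (c : ℝ) : Prop :=
  (∀ v ∈ C, c ≤ dotR u v) ∧ ∃ v ∈ C, dotR u v = c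

/-- `F` is a proper face of `C`: `F = S ∩ C` for some supporting hyperplane `S`, `F ≠ C`. -/
def IsProperFace {n : ℕ} (C F : Set (Fin n → ℝ)) : Prop :=
  ∃ u c, u ≠ 0 ∧ IsSupp C u c ∧ F = {v ∈ C | dotR u v = c} ∧ F ≠ C

/-- A compact face is a proper face that is compact. -/
def IsCompactFace {n : ℕ} (C F : Set (Fin n → ℝ)) : Prop :=
  IsProperFace C F ∧ IsCompact F

/-- A maximal compact face: a compact face maximal under inclusion. -/
def IsMaxCompactFace {n : ℕ} (C F : Set (Fin n → ℝ)) : Prop :=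
  IsCompactFace C F ∧ ∀ G, IsCompactFace C G → F ⊆ G → F = G

/-- The graded maximal ideal `(x_1, …, x_n)` of `K[x_1, …, x_n]`. -/
def maxIdeal (K : Type*) [Field K] (n : ℕ) : Ideal (MvPolynomial (Fin n) K) :=
  Ideal.span (Set.range fun i => (X i : MvPolynomial (Fin n) K))

/-- `f` is a minimal generator of the monomial ideal `L` if `f ∈ L` and `f ∉ (x_1,…,x_n)·L`. -/
def IsMinGen {K : Type*} [Field K] {n : ℕ} (L : Ideal (MvPolynomial (Fin n) K))
    (f : MvPolynomial (Fin n) K) : Prop :=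
  f ∈ L ∧ f ∉ maxIdeal K n * L

/-- `L` is a reduction ideal of `I`: `L ⊆ I` and `L·I^{m-1} = I^m` for some `m ≥ 1`. -/
def IsReduction {K : Type*} [Field K] {n : ℕ} (L I : Ideal (MvPolynomial (Fin n) K)) : Prop :=
  L ≤ I ∧ ∃ m : ℕ, 1 ≤ m ∧ L * I ^ (m - 1) = I ^ m

/-!
Write `N` for the Newton polyhedron of `I` and `J` for the ideal generated by the monomials at the
extreme points of `N`.

Some finite set `T` of extreme points of `N` satisfies `N ⊆ conv T + ℝ^n_{≥0}`: by Dickson's lemma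
finitely many exponents suffice, and each point of a minimal finite choice is extreme. If
`x^a ∈ I^m`, then `a = m v` with `v ∈ N`, so `a` dominates a nonnegative combination of `T` of total
weight `m`; rounding the weights down loses less than `#T`, whence `I^(k + #T) ⊆ J^k` for all `k`.
As `A` is Noetherian, the `J`-filtration `k ↦ I^(k + #T)`, being contained in the stable filtration
`k ↦ J^k`, is stable, that is, `J·I^m = I^(m+1)` for large `m`.

Conversely, if `a` is an extreme point of `N` and `L·I^m = I^(m+1)` with `m ≥ 1`, then
`(m + 1) a = p + m v` with `x^p ∈ L` and `v ∈ N`; as `a` is extreme, `p = a`.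
-/

section UpperConvexHull

variable (𝕜 : Type*) {E : Type*} [Field 𝕜] [LinearOrder 𝕜] [AddCommGroup E]
  [PartialOrder E] [Module 𝕜 E]

/-- The smallest convex upper set containing `s`, encoded as the sum of `conv s` and the cone of
nonnegative vectors: the Newton polyhedron of a monomial ideal, for `s` the set of exponents of its
monomial generators. -/
def upperConvexHull (s : Set E) : Set E := convexHull 𝕜 s + Set.Ici 0

variable {𝕜} {s t : Set E} {b p q x y : E}

lemma upperConvexHull_mono (h : s ⊆ t) : upperConvexHull 𝕜 s ⊆ upperConvexHull 𝕜 t :=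
  Set.add_subset_add_right (convexHull_mono h)

variable [IsOrderedAddMonoid E]

lemma mem_upperConvexHull : x ∈ upperConvexHull 𝕜 s ↔ ∃ p ∈ convexHull 𝕜 s, p ≤ x := by
  constructor
  · rintro ⟨p, hp, d, hd, rfl⟩
    exact ⟨p, hp, le_add_of_nonneg_right hd⟩
  · rintro ⟨p, hp, hpx⟩
    exact ⟨p, hp, x - p, sub_nonneg.2 hpx, add_sub_cancel p x⟩

lemma subset_upperConvexHull : s ⊆ upperConvexHull 𝕜 s := fun x hx =>
  mem_upperConvexHull.2 ⟨x, subset_convexHull 𝕜 s hx, le_rfl⟩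

lemma isUpperSet_upperConvexHull : IsUpperSet (upperConvexHull 𝕜 s) := by
  intro x y hxy hx
  obtain ⟨p, hp, hpx⟩ := mem_upperConvexHull.1 hx
  exact mem_upperConvexHull.2 ⟨p, hp, hpx.trans hxy⟩

lemma upperConvexHull_min (hst : s ⊆ t) (ht : Convex 𝕜 t) (ht' : IsUpperSet t) :
    upperConvexHull 𝕜 s ⊆ t := by
  intro x hx
  obtain ⟨p, hp, hpx⟩ := mem_upperConvexHull.1 hx
  exact ht' hpx (convexHull_min hst ht hp)

lemma le_or_exists_of_mem_upperConvexHull_insert [IsStrictOrderedRing 𝕜]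
    (hx : x ∈ upperConvexHull 𝕜 (insert b s)) :
    b ≤ x ∨ ∃ p ∈ convexHull 𝕜 s, ∃ r : 𝕜, 0 < r ∧ r • (p - b) ≤ x - b := by
  obtain ⟨z, hz, hzx⟩ := mem_upperConvexHull.1 hx
  obtain rfl | hs := s.eq_empty_or_nonempty
  · have hzb : z = b := by simpa using hz
    exact .inl (hzb ▸ hzx)
  · rw [convexHull_insert hs, mem_convexJoin] at hz
    obtain ⟨_, rfl, p, hp, hz⟩ := hz
    rw [segment_eq_image'] at hz
    obtain ⟨r, ⟨hr, -⟩, rfl⟩ := hz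
    obtain rfl | hr := hr.eq_or_lt
    · exact .inl (by simpa using hzx)
    · exact .inr ⟨p, hp, r, hr, le_sub_iff_add_le'.2 hzx⟩

variable [PosSMulMono 𝕜 E]

lemma convex_upperConvexHull : Convex 𝕜 (upperConvexHull 𝕜 s) :=
  (convex_convexHull 𝕜 s).add (convex_Ici 0)

lemma upperConvexHull_subset_upperConvexHull (h : s ⊆ upperConvexHull 𝕜 t) :
    upperConvexHull 𝕜 s ⊆ upperConvexHull 𝕜 t :=
  upperConvexHull_min h convex_upperConvexHull isUpperSet_upperConvexHull

variable [IsStrictOrderedRing 𝕜]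

lemma mem_upperConvexHull_of_smul_sub_add_smul_sub_nonpos (hp : p ∈ convexHull 𝕜 s)
    (hq : q ∈ convexHull 𝕜 s) {r r' : 𝕜} (hr : 0 < r) (hr' : 0 ≤ r')
    (h : r • (p - b) + r' • (q - b) ≤ 0) : b ∈ upperConvexHull 𝕜 s := by
  have hpos : 0 < r + r' := by positivity
  refine mem_upperConvexHull.2 ⟨(r / (r + r')) • p + (r' / (r + r')) • q,
    convex_convexHull 𝕜 s hp hq (by positivity) (by positivity) (by field_simp), ?_⟩
  have hsub : (r / (r + r')) • p + (r' / (r + r')) • q - b =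
      (r + r')⁻¹ • (r • (p - b) + r' • (q - b)) := by
    match_scalars <;> field_simp
    ring
  rw [← sub_nonpos, hsub]
  exact smul_nonpos_of_nonneg_of_nonpos (inv_nonneg.2 hpos.le) h

lemma le_left_of_mem_openSegment_of_notMem_upperConvexHull (hb : b ∉ upperConvexHull 𝕜 s)
    (hx : x ∈ upperConvexHull 𝕜 (insert b s)) (hy : y ∈ upperConvexHull 𝕜 (insert b s))
    (hbxy : b ∈ openSegment 𝕜 x y) : b ≤ x := by
  obtain hbx | ⟨p, hp, r, hr, hpx⟩ := le_or_exists_of_mem_upperConvexHull_insert hx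
  · exact hbx
  obtain ⟨q, hq, r', hr', hqy⟩ : ∃ q ∈ convexHull 𝕜 s, ∃ r' : 𝕜, 0 ≤ r' ∧ r' • (q - b) ≤ y - b := by
    obtain hby | ⟨q, hq, r', hr', hqy⟩ := le_or_exists_of_mem_upperConvexHull_insert hy
    · exact ⟨p, hp, 0, le_rfl, by simpa using hby⟩
    · exact ⟨q, hq, r', hr'.le, hqy⟩
  obtain ⟨c, d, hc, hd, hcd, hb'⟩ := hbxy
  refine absurd (mem_upperConvexHull_of_smul_sub_add_smul_sub_nonpos hp hq (mul_pos hc hr)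
    (mul_nonneg hd.le hr') ?_) hb
  calc (c * r) • (p - b) + (d * r') • (q - b)
      = c • r • (p - b) + d • r' • (q - b) := by simp only [mul_smul]
    _ ≤ c • (x - b) + d • (y - b) := by gcongr
    _ = c • x + d • y - (c + d) • b := by module
    _ = 0 := by rw [hb', hcd, one_smul, sub_self]

lemma mem_extremePoints_upperConvexHull_insert (hb : b ∉ upperConvexHull 𝕜 s) :
    b ∈ (upperConvexHull 𝕜 (insert b s)).extremePoints 𝕜 := by
  refine ⟨subset_upperConvexHull (Set.mem_insert b s), fun x hx y hy hbxy => ?_⟩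
  have hbx : b ≤ x := le_left_of_mem_openSegment_of_notMem_upperConvexHull hb hx hy hbxy
  have hby : b ≤ y :=
    le_left_of_mem_openSegment_of_notMem_upperConvexHull hb hy hx (openSegment_symm 𝕜 x y ▸ hbxy)
  refine hbx.antisymm' ?_
  obtain ⟨c, d, hc, hd, hcd, hb'⟩ := hbxy
  have hcx : c • x ≤ c • b := by
    calc c • x = b - d • y := eq_sub_of_add_eq hb'
      _ ≤ b - d • b := by gcongr
      _ = c • b := by rw [sub_eq_iff_eq_add, ← add_smul, hcd, one_smul]
  exact le_of_smul_le_smul_left hcx hc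

theorem subset_upperConvexHull_inter_extremePoints (hs : s.Finite) :
    s ⊆ upperConvexHull 𝕜 (s ∩ (upperConvexHull 𝕜 s).extremePoints 𝕜) := by
  obtain ⟨t, hts, ht⟩ := exists_minimal_le_of_wellFoundedLT
    (fun t : Finset E => s ⊆ upperConvexHull 𝕜 (t : Set E)) hs.toFinset
    (by simpa using subset_upperConvexHull)
  have hts : (t : Set E) ⊆ s := by simpa using hts
  have hull_eq : upperConvexHull 𝕜 s = upperConvexHull 𝕜 (t : Set E) :=
    (upperConvexHull_subset_upperConvexHull ht.prop).antisymm (upperConvexHull_mono hts)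
  refine ht.prop.trans (upperConvexHull_mono fun b hb => ⟨hts hb, ?_⟩)
  have insert_erase : insert b (t.erase b : Set E) = t := by
    rw [← Finset.coe_insert, Finset.insert_erase hb]
  have irredundant : b ∉ upperConvexHull 𝕜 (t.erase b : Set E) := by
    intro hb'
    refine ht.not_prop_of_lt (Finset.erase_ssubset hb) (ht.prop.trans ?_)
    refine upperConvexHull_subset_upperConvexHull ?_
    rw [← insert_erase]
    exact Set.insert_subset hb' subset_upperConvexHull
  rw [hull_eq, ← insert_erase]
  exact mem_extremePoints_upperConvexHull_insert irredundant

end UpperConvexHull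

lemma exists_finite_subset_subset_upperClosure {α : Type*} [PartialOrder α] [WellQuasiOrderedLE α]
    (s : Set α) : ∃ t ⊆ s, t.Finite ∧ s ⊆ upperClosure t := by
  refine ⟨{x | Minimal (· ∈ s) x}, fun x hx => hx.prop,
    WellQuasiOrderedLE.finite_of_isAntichain (setOfPred_minimal_antichain _), fun x hx => ?_⟩
  obtain ⟨y, hyx, hy⟩ := exists_minimal_le_of_wellFoundedLT (· ∈ s) x hx
  exact ⟨y, hy, hyx⟩

section Reduction

variable {R : Type*} [CommRing R] [IsNoetherianRing R]

theorem exists_mul_pow_eq_pow_succ_of_pow_add_le_pow {I J : Ideal R} (hJI : J ≤ I) {N : ℕ}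
    (h : ∀ k, I ^ (k + N) ≤ J ^ k) : ∃ m, J * I ^ m = I ^ (m + 1) := by
  let F : J.Filtration R :=
    { N := fun k => I ^ (k + N)
      mono := fun k => Ideal.pow_le_pow_right (by omega)
      smul_le := fun k => by
        rw [smul_eq_mul, add_right_comm, pow_succ']
        exact Ideal.mul_mono_left hJI }
  have hF : F ≤ J.stableFiltration ⊤ := fun k => by simpa [F, Ideal.stableFiltration] using h k
  obtain ⟨k, hk⟩ := (J.stableFiltration_stable ⊤).of_le hF
  refine ⟨k + N, ?_⟩
  rw [add_right_comm]
  exact hk k le_rfl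

end Reduction

section Exponents

variable {σ R : Type*} [CommSemiring R] {I J : Ideal (MvPolynomial σ R)} {a b : σ →₀ ℕ}

/-- The set `Γ(I)` of exponents of the monomials lying in the ideal `I`. -/
def exponents (I : Ideal (MvPolynomial σ R)) : Set (σ →₀ ℕ) := {a | monomial a 1 ∈ I}

lemma exponents_mono (h : I ≤ J) : exponents I ⊆ exponents J := fun _ ha => h ha

lemma add_mem_exponents_mul (ha : a ∈ exponents I) (hb : b ∈ exponents J) :
    a + b ∈ exponents (I * J) := by
  simpa [exponents, monomial_mul] using Ideal.mul_mem_mul ha hb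

lemma isUpperSet_exponents : IsUpperSet (exponents I) := by
  intro a b hab ha
  obtain ⟨d, rfl⟩ := exists_add_of_le hab
  exact Ideal.mul_le_left (add_mem_exponents_mul (J := ⊤) ha trivial)

lemma nsmul_mem_exponents_pow (ha : a ∈ exponents I) (k : ℕ) : k • a ∈ exponents (I ^ k) := by
  simpa [exponents, monomial_pow] using Ideal.pow_mem_pow ha k

lemma mem_exponents_pow_of_sum_nsmul_le {T : Finset (σ →₀ ℕ)} (hT : ↑T ⊆ exponents I)
    {c : (σ →₀ ℕ) → ℕ} {k : ℕ} (hk : k ≤ ∑ s ∈ T, c s) (ha : ∑ s ∈ T, c s • s ≤ a) :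
    a ∈ exponents (I ^ k) := by
  refine isUpperSet_exponents ha (exponents_mono (Ideal.pow_le_pow_right hk) ?_)
  rw [exponents, Set.mem_ofPred_eq, monomial_sum_one, ← Finset.prod_pow_eq_pow_sum]
  exact Ideal.prod_mem_prod fun s hs => nsmul_mem_exponents_pow (hT hs) (c s)

lemma exponents_span_monomial_image [Nontrivial R] (S : Set (σ →₀ ℕ)) :
    exponents (Ideal.span ((fun a => monomial a (1 : R)) '' S)) = upperClosure S := by
  ext a
  simp [exponents, mem_ideal_span_monomial_image, support_monomial]

lemma span_monomial_image_mul (S T : Set (σ →₀ ℕ)) :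
    Ideal.span ((fun a => monomial a (1 : R)) '' S) *
        Ideal.span ((fun a => monomial a (1 : R)) '' T) =
      Ideal.span ((fun a => monomial a (1 : R)) '' (S + T)) := by
  rw [Ideal.span_mul_span']
  exact congrArg _ (Set.image_image2_distrib fun a b => by simp [monomial_mul]).symm

end Exponents

namespace IsMonomialIdeal

variable {K : Type*} [Field K] {n : ℕ} {I L : Ideal (MvPolynomial (Fin n) K)}

lemma le_of_exponents_subset (hI : IsMonomialIdeal I) (h : exponents I ⊆ exponents L) : I ≤ L := by
  obtain ⟨S, rfl⟩ := hI
  rw [exponents_span_monomial_image] at h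
  rw [Ideal.span_le, Set.image_subset_iff]
  exact subset_upperClosure.trans h

lemma mul (hL : IsMonomialIdeal L) (hI : IsMonomialIdeal I) : IsMonomialIdeal (L * I) := by
  obtain ⟨S, rfl⟩ := hL
  obtain ⟨T, rfl⟩ := hI
  exact ⟨S + T, span_monomial_image_mul S T⟩

lemma pow (hI : IsMonomialIdeal I) (k : ℕ) : IsMonomialIdeal (I ^ k) := by
  induction k with
  | zero => exact ⟨{0}, by simp [Ideal.one_eq_top]⟩
  | succ k ih => exact pow_succ I k ▸ ih.mul hI

lemma exponents_mul_subset (hL : IsMonomialIdeal L) (hI : IsMonomialIdeal I) :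
    exponents (L * I) ⊆ exponents L + exponents I := by
  obtain ⟨S, rfl⟩ := hL
  obtain ⟨T, rfl⟩ := hI
  simp only [span_monomial_image_mul, exponents_span_monomial_image]
  rintro _ ⟨_, ⟨s, hs, t, ht, rfl⟩, hle⟩
  obtain ⟨d, rfl⟩ := exists_add_of_le hle
  exact ⟨s, subset_upperClosure hs, t + d, ⟨t, ht, le_self_add⟩, (add_assoc s t d).symm⟩

end IsMonomialIdeal

section Rounding

variable {n : ℕ}

lemma expVec_add (a b : Fin n →₀ ℕ) : expVec (a + b) = expVec a + expVec b := by
  ext i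
  simp [expVec]

lemma expVec_nsmul (k : ℕ) (a : Fin n →₀ ℕ) : expVec (k • a) = (k : ℝ) • expVec a := by
  ext i
  simp [expVec]

lemma expVec_le_expVec {a b : Fin n →₀ ℕ} : expVec a ≤ expVec b ↔ a ≤ b := by
  simp [expVec, Pi.le_def, Finsupp.le_def]

lemma expVec_nonneg (a : Fin n →₀ ℕ) : 0 ≤ expVec a := fun _ => Nat.cast_nonneg _

lemma expVec_injective : Function.Injective (expVec (n := n)) := fun _ _ h =>
  (expVec_le_expVec.1 h.le).antisymm (expVec_le_expVec.1 h.ge)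

lemma expVec_sum {ι : Type*} (T : Finset ι) (f : ι → Fin n →₀ ℕ) :
    expVec (∑ s ∈ T, f s) = ∑ s ∈ T, expVec (f s) := by
  ext i
  simp [expVec, Finsupp.finsetSum_apply]

lemma sum_floor_nsmul_le {T : Finset (Fin n →₀ ℕ)} {w : (Fin n →₀ ℕ) → ℝ} {a : Fin n →₀ ℕ}
    (hw : ∀ s ∈ T, 0 ≤ w s) (ha : ∑ s ∈ T, w s • expVec s ≤ expVec a) :
    ∑ s ∈ T, ⌊w s⌋₊ • s ≤ a := by
  rw [← expVec_le_expVec]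
  calc expVec (∑ s ∈ T, ⌊w s⌋₊ • s) = ∑ s ∈ T, (⌊w s⌋₊ : ℝ) • expVec s := by
        simp only [expVec_sum, expVec_nsmul]
    _ ≤ ∑ s ∈ T, w s • expVec s := Finset.sum_le_sum fun s hs =>
        smul_le_smul_of_nonneg_right (Nat.floor_le (hw s hs)) (expVec_nonneg s)
    _ ≤ expVec a := ha

lemma le_sum_floor {ι : Type*} {T : Finset ι} {w : ι → ℝ} {k : ℕ}
    (hk : (k + T.card : ℝ) ≤ ∑ s ∈ T, w s) : k ≤ ∑ s ∈ T, ⌊w s⌋₊ := by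
  have hfloor : ∑ s ∈ T, w s ≤ ∑ s ∈ T, (⌊w s⌋₊ : ℝ) + T.card := by
    calc ∑ s ∈ T, w s ≤ ∑ s ∈ T, ((⌊w s⌋₊ : ℝ) + 1) :=
          Finset.sum_le_sum fun s _ => (Nat.lt_floor_add_one (w s)).le
      _ = ∑ s ∈ T, (⌊w s⌋₊ : ℝ) + T.card := by simp [Finset.sum_add_distrib]
  exact_mod_cast (add_le_add_iff_right _).1 (hk.trans hfloor)

lemma exists_weights_of_mem_upperConvexHull {T : Finset (Fin n →₀ ℕ)} {v : Fin n → ℝ}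
    (hv : v ∈ upperConvexHull ℝ (expVec '' (T : Set (Fin n →₀ ℕ)))) :
    ∃ w : (Fin n →₀ ℕ) → ℝ, (∀ s ∈ T, 0 ≤ w s) ∧ ∑ s ∈ T, w s = 1 ∧
      ∑ s ∈ T, w s • expVec s ≤ v := by
  obtain ⟨p, hp, hpv⟩ := mem_upperConvexHull.1 hv
  rw [← Finset.coe_image, Finset.mem_convexHull'] at hp
  obtain ⟨w, hw, hw₁, rfl⟩ := hp
  rw [Finset.sum_image expVec_injective.injOn] at hw₁ hpv
  exact ⟨w ∘ expVec, fun s hs => hw _ (Finset.mem_image_of_mem _ hs), hw₁, hpv⟩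

lemma exists_sum_nsmul_le_of_expVec_mem_smul_upperConvexHull {T : Finset (Fin n →₀ ℕ)} {k : ℕ}
    {a : Fin n →₀ ℕ} (ha : expVec a ∈
      ((k + T.card : ℕ) : ℝ) • upperConvexHull ℝ (expVec '' (T : Set (Fin n →₀ ℕ)))) :
    ∃ c : (Fin n →₀ ℕ) → ℕ, k ≤ ∑ s ∈ T, c s ∧ ∑ s ∈ T, c s • s ≤ a := by
  obtain ⟨v, hv, hva⟩ := ha
  obtain ⟨w, hw, hw₁, hwv⟩ := exists_weights_of_mem_upperConvexHull hv
  set m : ℝ := ((k + T.card : ℕ) : ℝ)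
  have hm : 0 ≤ m := Nat.cast_nonneg _
  refine ⟨fun s => ⌊m * w s⌋₊, le_sum_floor ?_,
    sum_floor_nsmul_le (fun s hs => mul_nonneg hm (hw s hs)) ?_⟩
  · rw [← Finset.mul_sum, hw₁, mul_one, ← Nat.cast_add]
  · simp only [mul_smul, ← Finset.smul_sum, ← hva]
    exact smul_le_smul_of_nonneg_left hwv hm

end Rounding

section NewtonPolyhedron

variable {K : Type*} [Field K] {n : ℕ} {I L : Ideal (MvPolynomial (Fin n) K)} {a : Fin n →₀ ℕ}

lemma expVec_mem_newtonPolyhedron (ha : a ∈ exponents I) : expVec a ∈ newtonPolyhedron I :=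
  subset_convexHull ℝ _ ⟨a, ha, rfl⟩

lemma convex_newtonPolyhedron : Convex ℝ (newtonPolyhedron I) := convex_convexHull ℝ _

lemma mem_exponents_of_expVec_mem_extremePoints
    (ha : expVec a ∈ (newtonPolyhedron I).extremePoints ℝ) : a ∈ exponents I := by
  obtain ⟨b, hb, hab⟩ := extremePoints_convexHull_subset ha
  exact expVec_injective hab ▸ hb

lemma IsMonomialIdeal.expVec_mem_smul_newtonPolyhedron (hI : IsMonomialIdeal I) {k : ℕ}
    (ha : a ∈ exponents (I ^ (k + 1))) :
    expVec a ∈ ((k + 1 : ℕ) : ℝ) • newtonPolyhedron I := by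
  induction k generalizing a with
  | zero => simpa using expVec_mem_newtonPolyhedron (I := I) (by simpa using ha)
  | succ k ih =>
    rw [pow_succ] at ha
    obtain ⟨p, hp, q, hq, rfl⟩ := (hI.pow (k + 1)).exponents_mul_subset hI ha
    rw [expVec_add, Nat.cast_succ,
      convex_newtonPolyhedron.add_smul (Nat.cast_nonneg _) zero_le_one, one_smul]
    exact Set.add_mem_add (ih hp) (expVec_mem_newtonPolyhedron hq)

lemma exists_finite_newtonPolyhedron_subset_upperConvexHull
    (I : Ideal (MvPolynomial (Fin n) K)) :
    ∃ S ⊆ exponents I, S.Finite ∧ newtonPolyhedron I ⊆ upperConvexHull ℝ (expVec '' S) := by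
  obtain ⟨S, hSI, hS, hIS⟩ := exists_finite_subset_subset_upperClosure (exponents I)
  refine ⟨S, hSI, hS, convexHull_min ?_ convex_upperConvexHull⟩
  rintro _ ⟨a, ha, rfl⟩
  obtain ⟨s, hs, hsa⟩ := hIS ha
  exact isUpperSet_upperConvexHull (expVec_le_expVec.2 hsa)
    (subset_upperConvexHull (Set.mem_image_of_mem expVec hs))

lemma exists_finset_extremePoints_newtonPolyhedron_subset (I : Ideal (MvPolynomial (Fin n) K)) :
    ∃ T : Finset (Fin n →₀ ℕ), (∀ s ∈ T, expVec s ∈ (newtonPolyhedron I).extremePoints ℝ) ∧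
      newtonPolyhedron I ⊆ upperConvexHull ℝ (expVec '' (T : Set (Fin n →₀ ℕ))) := by
  obtain ⟨S, hSI, hS, hIS⟩ := exists_finite_newtonPolyhedron_subset_upperConvexHull I
  set C := upperConvexHull ℝ (expVec '' S)
  have hT : {s ∈ S | expVec s ∈ C.extremePoints ℝ}.Finite := hS.subset (Set.sep_subset _ _)
  refine ⟨hT.toFinset, fun s hs => ?_, hIS.trans (upperConvexHull_subset_upperConvexHull ?_)⟩
  · obtain ⟨hsS, hsC⟩ : s ∈ S ∧ expVec s ∈ C.extremePoints ℝ := by simpa using hs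
    exact inter_extremePoints_subset_extremePoints_of_subset hIS
      ⟨expVec_mem_newtonPolyhedron (hSI hsS), hsC⟩
  · refine (subset_upperConvexHull_inter_extremePoints (hS.image expVec)).trans
      (upperConvexHull_mono ?_)
    rintro _ ⟨⟨s, hs, rfl⟩, hsC⟩
    exact ⟨s, by simpa using ⟨hs, hsC⟩, rfl⟩

/-- The candidate minimal reduction of `I`: the ideal generated by the monomials whose exponents are
the extreme points of the Newton polyhedron of `I`. -/
def extremeIdeal (I : Ideal (MvPolynomial (Fin n) K)) : Ideal (MvPolynomial (Fin n) K) :=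
  Ideal.span {f | ∃ a : Fin n →₀ ℕ,
    expVec a ∈ Set.extremePoints ℝ (newtonPolyhedron I) ∧ f = monomial a (1 : K)}

lemma extremeIdeal_le_iff : extremeIdeal I ≤ L ↔
    ∀ a : Fin n →₀ ℕ, expVec a ∈ (newtonPolyhedron I).extremePoints ℝ → a ∈ exponents L := by
  rw [extremeIdeal, Ideal.span_le]
  exact ⟨fun h a ha => h ⟨a, ha, rfl⟩, by rintro h _ ⟨a, ha, rfl⟩; exact h a ha⟩

lemma IsMonomialIdeal.exists_pow_add_le_extremeIdeal_pow (hI : IsMonomialIdeal I) :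
    ∃ N, ∀ k, I ^ (k + N) ≤ extremeIdeal I ^ k := by
  obtain ⟨T, hT, hIT⟩ := exists_finset_extremePoints_newtonPolyhedron_subset I
  refine ⟨T.card, fun k => ?_⟩
  cases k with
  | zero => simp
  | succ k =>
    refine (hI.pow _).le_of_exponents_subset fun a ha => ?_
    rw [add_right_comm] at ha
    have haT := Set.smul_set_mono hIT (hI.expVec_mem_smul_newtonPolyhedron ha)
    rw [add_right_comm] at haT
    obtain ⟨c, hk, hc⟩ := exists_sum_nsmul_le_of_expVec_mem_smul_upperConvexHull haT
    exact mem_exponents_pow_of_sum_nsmul_le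
      (fun s hs => extremeIdeal_le_iff.1 le_rfl s (hT s hs)) hk hc

theorem IsMonomialIdeal.isReduction_extremeIdeal (hI : IsMonomialIdeal I) :
    IsReduction (extremeIdeal I) I := by
  have hle : extremeIdeal I ≤ I :=
    extremeIdeal_le_iff.2 fun _ => mem_exponents_of_expVec_mem_extremePoints
  obtain ⟨N, hN⟩ := hI.exists_pow_add_le_extremeIdeal_pow
  obtain ⟨m, hm⟩ := exists_mul_pow_eq_pow_succ_of_pow_add_le_pow hle hN
  exact ⟨hle, m + 1, Nat.le_add_left 1 m, hm⟩

lemma IsReduction.exists_mul_pow_eq_pow (hL : IsReduction L I) :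
    ∃ k, L * I ^ (k + 1) = I ^ (k + 2) := by
  obtain ⟨-, m, hm, hLm⟩ := hL
  obtain ⟨k, rfl⟩ := Nat.exists_eq_add_of_le' hm
  rw [Nat.add_sub_cancel] at hLm
  exact ⟨k, by rw [pow_succ I k, ← mul_assoc, hLm, ← pow_succ]⟩

theorem IsReduction.extremeIdeal_le (hL : IsReduction L I) (hLmon : IsMonomialIdeal L)
    (hI : IsMonomialIdeal I) : extremeIdeal I ≤ L := by
  refine extremeIdeal_le_iff.2 fun a ha => ?_
  obtain ⟨k, hk⟩ := hL.exists_mul_pow_eq_pow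
  have hmem : (k + 2) • a ∈ exponents (L * I ^ (k + 1)) :=
    hk ▸ nsmul_mem_exponents_pow (mem_exponents_of_expVec_mem_extremePoints ha) (k + 2)
  obtain ⟨p, hp, q, hq, hpq⟩ := hLmon.exponents_mul_subset (hI.pow (k + 1)) hmem
  obtain ⟨v, hv, hvq⟩ := hI.expVec_mem_smul_newtonPolyhedron hq
  have hsum : expVec p + ((k + 1 : ℕ) : ℝ) • v = ((k + 2 : ℕ) : ℝ) • expVec a := by
    rw [← expVec_nsmul, ← hpq, expVec_add, ← hvq]
  have hseg : expVec a ∈ openSegment ℝ (expVec p) v := by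
    refine ⟨((k + 2 : ℕ) : ℝ)⁻¹, ((k + 2 : ℕ) : ℝ)⁻¹ * (k + 1 : ℕ), by positivity, by positivity,
      by push_cast; field_simp; ring, ?_⟩
    rw [mul_smul, ← smul_add, hsum, inv_smul_smul₀ (by positivity)]
  have hpa : expVec p = expVec a :=
    ha.2 (expVec_mem_newtonPolyhedron (exponents_mono hL.1 hp)) hv hseg
  exact expVec_injective hpa ▸ hp

end NewtonPolyhedron

theorem stmt2 {K : Type*} [Field K] {n : ℕ} (I J : Ideal (MvPolynomial (Fin n) K))
    (hI : IsMonomialIdeal I) (hne : I ≠ ⊥)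
    (hJ : J = Ideal.span {f | ∃ a : Fin n →₀ ℕ,
        expVec a ∈ Set.extremePoints ℝ (newtonPolyhedron I) ∧ f = monomial a (1 : K)}) :
    IsReduction J I ∧
      ∀ L : Ideal (MvPolynomial (Fin n) K),
        IsMonomialIdeal L → IsReduction L I → J ≤ L := by
  subst hJ
  exact ⟨hI.isReduction_extremeIdeal, fun L hL hLI => hLI.extremeIdeal_le hL hI⟩
end
end

section
/- Let A = K[x_1,…,x_n] with graded maximal ideal m = (x_1,…,x_n), and let L and P be homogeneous ideals of A with I = L + P. If P^t ⊆ m·I^t for some integer t ≥ 1, then I^t = L·I^{t−1}; in particular, L is a reduction ideal of I. -/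
open MvPolynomial Pointwise

attribute [local instance] Classical.propDecidable

noncomputable section

/-- A homogeneous ideal: an ideal generated by homogeneous polynomials. -/
def IsHomogIdeal {K : Type*} [Field K] {n : ℕ} (I : Ideal (MvPolynomial (Fin n) K)) : Prop :=
  ∃ S : Set (MvPolynomial (Fin n) K), (∀ f ∈ S, ∃ d, f.IsHomogeneous d) ∧ I = Ideal.span S

/-!
Every product in the expansion of `(L + P)^t` with a factor in `L` lies in `L * I^(t-1)`, so
`I^t = L * I^(t-1) + P^t`, and the hypothesis on `P^t` gives `I^t ⊆ L * I^(t-1) + m * I^t`.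
Since `L * I^(t-1)` is homogeneous, a graded Nakayama lemma removes the last summand: if
`N ⊆ J + m * N` with `J` homogeneous, then the degree `d` component of an element of `m * N` only
involves components of degree less than `d` of elements of `N`, so by induction on `d` all
components of elements of `N` lie in `J`.
-/

open DirectSum HomogeneousIdeal

attribute [local instance] MvPolynomial.gradedAlgebra

theorem sup_pow_succ_eq {α : Type*} [IdemCommSemiring α] (a b : α) (s : ℕ) :
    (a ⊔ b) ^ (s + 1) = a * (a ⊔ b) ^ s ⊔ b ^ (s + 1) := by
  simp only [← add_eq_sup]
  induction s with
  | zero => simp only [zero_add, pow_zero, pow_one, mul_one]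
  | succ s ih =>
    have absorb : b * (a + b) ^ s ≤ (a + b) ^ (s + 1) := by
      rw [pow_succ']
      exact mul_le_mul_left le_add_self _
    calc (a + b) ^ (s + 2)
        = a * (a + b) ^ (s + 1) + b * (a + b) ^ (s + 1) := by ring
      _ = a * ((a + b) ^ (s + 1) + b * (a + b) ^ s) + b ^ (s + 2) := by
        nth_rw 2 [ih]
        ring
      _ = a * (a + b) ^ (s + 1) + b ^ (s + 2) := by rw [add_eq_left_iff_le.2 absorb]

section GradedNakayama

variable {ι A M σ τ : Type*} [DecidableEq ι] [Semiring A] [AddCommMonoid M] [Module A M]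
  [SetLike τ M] [AddSubmonoidClass τ M] {ℳ : ι → τ} [Decomposition ℳ] {N J : Submodule A M} {d : ι}

theorem decompose_add_mem {x y : M} (hx : (decompose ℳ x d : M) ∈ J)
    (hy : (decompose ℳ y d : M) ∈ J) : (decompose ℳ (x + y) d : M) ∈ J := by
  rw [decompose_add, DirectSum.add_apply, AddMemClass.coe_add]
  exact J.add_mem hx hy

variable [AddCommMonoid ι] [PartialOrder ι] [AddRightStrictMono ι] [SetLike σ A] {𝒜 : ι → σ}
  [SetLike.GradedSMul 𝒜 ℳ]

theorem decompose_smul_mem_of_pos {i : ι} {a : A} {x : M} (ha : a ∈ 𝒜 i) (hi : 0 < i)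
    (hx : ∀ e < d, (decompose ℳ x e : M) ∈ J) : (decompose ℳ (a • x) d : M) ∈ J := by
  classical
  rw [← sum_support_decompose ℳ x, Finset.smul_sum, decompose_sum, DFinsupp.finsetSum_apply,
    AddSubmonoidClass.coe_finsetSum]
  refine sum_mem fun e _ ↦ ?_
  have hmem : a • (decompose ℳ x e : M) ∈ ℳ (i + e) :=
    SetLike.GradedSMul.smul_mem (B := ℳ) ha (decompose ℳ x e).2
  obtain rfl | hne := eq_or_ne (i + e) d
  · rw [decompose_of_mem_same ℳ hmem]
    exact J.smul_mem a (hx e (lt_add_of_pos_left e hi))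
  · rw [decompose_of_mem_ne ℳ hmem hne]
    exact J.zero_mem

variable [CanonicallyOrderedAdd ι] [AddSubmonoidClass σ A] [GradedRing 𝒜]

theorem decompose_smul_mem_of_mem_irrelevant {a : A} {x : M} (ha : a ∈ 𝒜₊)
    (hx : ∀ e < d, (decompose ℳ x e : M) ∈ J) : (decompose ℳ (a • x) d : M) ∈ J := by
  have ha' : a ∈ AddSubmonoid.closure (⋃ i > 0, (𝒜 i : Set A)) := irrelevant_eq_closure 𝒜 ▸ ha
  clear ha
  induction ha' using AddSubmonoid.closure_induction with
  | mem b hb =>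
    obtain ⟨i, hi, hbi⟩ := Set.mem_iUnion₂.1 hb
    exact decompose_smul_mem_of_pos hbi hi hx
  | zero =>
    rw [zero_smul, decompose_zero]
    exact J.zero_mem
  | add b c _ _ hb hc => exact add_smul b c x ▸ decompose_add_mem hb hc

theorem decompose_mem_of_mem_irrelevant_smul (hN : ∀ x ∈ N, ∀ e < d, (decompose ℳ x e : M) ∈ J)
    {y : M} (hy : y ∈ 𝒜₊.toIdeal • N) : (decompose ℳ y d : M) ∈ J :=
  Submodule.smul_induction_on hy
    (fun _ ha x hx ↦ decompose_smul_mem_of_mem_irrelevant ha (hN x hx))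
    fun _ _ ↦ decompose_add_mem

theorem le_of_le_sup_irrelevant_smul [WellFoundedLT ι] (hJ : J.IsHomogeneous ℳ)
    (h : N ≤ J ⊔ 𝒜₊.toIdeal • N) : N ≤ J := by
  suffices components_mem : ∀ d, ∀ x ∈ N, (decompose ℳ x d : M) ∈ J from
    fun x hx ↦ (hJ.mem_iff ℳ).2 fun d ↦ components_mem d x hx
  intro d
  induction d using WellFoundedLT.induction with
  | ind d ih =>
    intro x hx
    obtain ⟨j, hj, y, hy, rfl⟩ := Submodule.mem_sup.1 (h hx)
    exact decompose_add_mem ((hJ.mem_iff ℳ).1 hj d)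
      (decompose_mem_of_mem_irrelevant_smul (fun z hz e he ↦ ih e he z hz) hy)

end GradedNakayama

section GradedRing

variable {ι A σ : Type*} [DecidableEq ι] [CommSemiring A] [SetLike σ A] [AddSubmonoidClass σ A]
  {𝒜 : ι → σ}

theorem isHomogeneous_pow [AddMonoid ι] [GradedRing 𝒜] {I : Ideal A} (hI : I.IsHomogeneous 𝒜)
    (s : ℕ) : (I ^ s).IsHomogeneous 𝒜 := by
  induction s with
  | zero => simpa only [pow_zero, Ideal.one_eq_top] using Ideal.IsHomogeneous.top 𝒜
  | succ s ih => exact pow_succ I s ▸ ih.mul hI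

theorem stmt4_general [AddCommMonoid ι] [PartialOrder ι] [CanonicallyOrderedAdd ι]
    [AddRightStrictMono ι] [WellFoundedLT ι] [GradedRing 𝒜] {L P : Ideal A}
    (hL : L.IsHomogeneous 𝒜) (hP : P.IsHomogeneous 𝒜) {t : ℕ} (ht : 1 ≤ t)
    (h : P ^ t ≤ 𝒜₊.toIdeal * (L ⊔ P) ^ t) : (L ⊔ P) ^ t = L * (L ⊔ P) ^ (t - 1) := by
  obtain ⟨s, rfl⟩ := Nat.exists_eq_add_of_le' ht
  rw [Nat.add_sub_cancel]
  have expansion := sup_pow_succ_eq L P s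
  apply le_antisymm
  · have hJ : (L * (L ⊔ P) ^ s).IsHomogeneous 𝒜 := hL.mul (isHomogeneous_pow (hL.sup hP) s)
    refine le_of_le_sup_irrelevant_smul (𝒜 := 𝒜) hJ ?_
    calc (L ⊔ P) ^ (s + 1) = L * (L ⊔ P) ^ s ⊔ P ^ (s + 1) := expansion
      _ ≤ L * (L ⊔ P) ^ s ⊔ 𝒜₊.toIdeal • (L ⊔ P) ^ (s + 1) := sup_le_sup_left h _
  · exact le_sup_left.trans expansion.ge

end GradedRing

theorem toIdeal_irrelevant_homogeneousSubmodule (σ R : Type*) [CommSemiring R] :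
    (irrelevant (homogeneousSubmodule σ R)).toIdeal = idealOfVars σ R := by
  apply le_antisymm
  · refine (toIdeal_irrelevant_le _).2 fun i hi p hp ↦ ?_
    rw [Submodule.mem_toAddSubmonoid, ← pow_one (idealOfVars σ R), mem_pow_idealOfVars_iff']
    exact fun x hx ↦ IsHomogeneous.coeff_eq_zero hp (by lia)
  · rw [Ideal.span_le]
    rintro _ ⟨i, rfl⟩
    exact mem_irrelevant_of_mem _ one_pos (isHomogeneous_X R i)

theorem IsHomogIdeal.isHomogeneous {K : Type*} [Field K] {n : ℕ}
    {I : Ideal (MvPolynomial (Fin n) K)} (hI : IsHomogIdeal I) :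
    I.IsHomogeneous (homogeneousSubmodule (Fin n) K) := by
  obtain ⟨S, hS, rfl⟩ := hI
  exact Ideal.homogeneous_span _ S hS

theorem stmt4 {K : Type*} [Field K] {n : ℕ} (L P I : Ideal (MvPolynomial (Fin n) K))
    (hL : IsHomogIdeal L) (hP : IsHomogIdeal P) (hI : I = L ⊔ P)
    (t : ℕ) (ht : 1 ≤ t) (h : P ^ t ≤ maxIdeal K n * I ^ t) :
    I ^ t = L * I ^ (t - 1) := by
  subst hI
  exact stmt4_general hL.isHomogeneous hP.isHomogeneous ht
    (toIdeal_irrelevant_homogeneousSubmodule (Fin n) K ▸ h)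
end
end

section
/- Let I ⊆ A = K[x_1,…,x_n] be a nonzero monomial ideal, u ∈ ℝ^n nonzero and c ∈ ℝ. The hyperplane S = {v ∈ ℝ^n : ⟨v,u⟩ = c} is a supporting hyperplane of conv(I) if and only if all coordinates of u are nonnegative, ⟨a,u⟩ ≥ c for every a ∈ ext(I), and ⟨a,u⟩ = c for some a ∈ ext(I). -/
open MvPolynomial Pointwise

attribute [local instance] Classical.propDecidable

noncomputable section

/-!
Every subset of `ℕⁿ` is partially well ordered (Dickson's lemma), so if `u ≥ 0`, then the monotone
map `a ↦ (⟨u, a⟩, a)` into `ℝ × ℝⁿ` with the lexicographic order attains a minimum on `Γ(I)`.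
The minimizer minimizes `⟨u, ·⟩` on the Newton polyhedron. It is also an extreme point: removing it
from the polyhedron leaves the points lying strictly above it in the lexicographic order, which form
a convex set. So for `u ≥ 0` the minimum of `⟨u, ·⟩` exists and is attained at an extreme point.
Conversely, `Γ(I)` is stable under adding exponents, so `⟨u, ·⟩` can be bounded below on it only if
`u ≥ 0`.
-/

/-- The set `Γ(I)` of exponents of the monomials belonging to an ideal `I`, which need not be a
monomial ideal. The Newton polyhedron of `I` is the convex hull of its image in `ℝⁿ`. -/
def exponentSet {R σ : Type*} [CommSemiring R] (I : Ideal (MvPolynomial σ R)) : Set (σ →₀ ℕ) :=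
  {a | monomial a 1 ∈ I}

section LexOrder

variable {𝕜 : Type*} [Preorder 𝕜] [Zero 𝕜]

instance instPosSMulStrictMonoProdLex {α β : Type*} [Preorder α] [Preorder β]
    [SMul 𝕜 α] [SMul 𝕜 β] [PosSMulStrictMono 𝕜 α] [PosSMulStrictMono 𝕜 β] :
    PosSMulStrictMono 𝕜 (α ×ₗ β) where
  smul_lt_smul_of_pos_left c hc _ _ hxy := Prod.Lex.lt_iff.2 <| (Prod.Lex.lt_iff.1 hxy).imp
    (smul_lt_smul_of_pos_left · hc)
    fun h => ⟨congrArg (c • ·) h.1, smul_lt_smul_of_pos_left h.2 hc⟩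

instance instPosSMulStrictMonoPiLex {ι : Type*} {α : ι → Type*} [LinearOrder ι]
    [∀ i, PartialOrder (α i)] [∀ i, SMul 𝕜 (α i)] [∀ i, PosSMulStrictMono 𝕜 (α i)] :
    PosSMulStrictMono 𝕜 (Lex (∀ i, α i)) where
  smul_lt_smul_of_pos_left c hc _ _ := fun ⟨i, heq, hlt⟩ =>
    ⟨i, fun j hj => congrArg (c • ·) (heq j hj), smul_lt_smul_of_pos_left hlt hc⟩

end LexOrder

section ConvexHull

lemma forall_mem_convexHull_le_map {𝕜 E L : Type*} [Semiring 𝕜] [PartialOrder 𝕜]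
    [AddCommMonoid E] [Module 𝕜 E] [AddCommMonoid L] [PartialOrder L] [IsOrderedAddMonoid L]
    [Module 𝕜 L] [PosSMulMono 𝕜 L] (φ : E →ₗ[𝕜] L) {s : Set E} {r : L}
    (h : ∀ y ∈ s, r ≤ φ y) : ∀ y ∈ convexHull 𝕜 s, r ≤ φ y :=
  convexHull_min h (convex_halfSpace_ge φ.isLinear r)

variable {𝕜 : Type*} [Field 𝕜] [LinearOrder 𝕜] [IsStrictOrderedRing 𝕜]

lemma mem_extremePoints_convexHull_of_forall_map_le {E L : Type*} [AddCommGroup E] [Module 𝕜 E]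
    [AddCommGroup L] [PartialOrder L] [IsOrderedAddMonoid L] [Module 𝕜 L] [PosSMulStrictMono 𝕜 L]
    {s : Set E} {x : E} {φ : E →ₗ[𝕜] L} (hφ : Function.Injective φ) (hx : x ∈ s)
    (hmin : ∀ y ∈ s, φ x ≤ φ y) : x ∈ (convexHull 𝕜 s).extremePoints 𝕜 := by
  have hdiff : convexHull 𝕜 s \ {x} = convexHull 𝕜 s ∩ φ ⁻¹' Set.Ioi (φ x) := by
    ext y
    refine and_congr_right fun hy => ?_
    have hle := forall_mem_convexHull_le_map φ hmin y hy
    exact (hφ.ne_iff' rfl).symm.trans hle.lt_iff_ne'.symm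
  rw [(convex_convexHull 𝕜 s).mem_extremePoints_iff_convex_sdiff, hdiff]
  exact ⟨subset_convexHull 𝕜 s hx,
    (convex_convexHull 𝕜 s).inter (convex_halfSpace_gt φ.isLinear _)⟩

lemma exists_mem_extremePoints_forall_map_le_of_isPWO {ι L : Type*} [LinearOrder ι]
    [WellFoundedLT ι] [AddCommGroup L] [LinearOrder L] [IsOrderedAddMonoid L] [Module 𝕜 L]
    [PosSMulStrictMono 𝕜 L] {s : Set (ι → 𝕜)} (hs : s.IsPWO) (hne : s.Nonempty)
    {f : (ι → 𝕜) →ₗ[𝕜] L} (hf : Monotone f) :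
    ∃ x ∈ (convexHull 𝕜 s).extremePoints 𝕜, ∀ y ∈ convexHull 𝕜 s, f x ≤ f y := by
  let φ : (ι → 𝕜) →ₗ[𝕜] L ×ₗ Lex (ι → 𝕜) :=
    (toLexLinearEquiv 𝕜 _).toLinearMap ∘ₗ f.prod (toLexLinearEquiv 𝕜 _).toLinearMap
  have hφ_inj : Function.Injective φ := fun x y h =>
    congrArg (fun z : L ×ₗ Lex (ι → 𝕜) => ofLex (ofLex z).2) h
  have hφ_mono : Monotone φ := fun x y h =>
    Prod.Lex.toLex_mono ⟨hf h, Pi.toLex_monotone h⟩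
  obtain ⟨x, hx⟩ := Set.IsPWO.exists_minimalFor φ s (hs.image_of_monotone hφ_mono) hne
  have hmin : ∀ y ∈ s, φ x ≤ φ y := fun y hy => hx.le hy
  exact ⟨x, mem_extremePoints_convexHull_of_forall_map_le hφ_inj hx.1 hmin,
    forall_mem_convexHull_le_map f fun y hy => Prod.Lex.monotone_fst _ _ (hmin y hy)⟩

end ConvexHull

lemma map_nonneg_of_isUpperSet_of_bddBelow {M R : Type*} [AddCommMonoid M] [Preorder M]
    [IsOrderedAddMonoid M] [AddCommGroup R] [LinearOrder R] [IsOrderedAddMonoid R] [Archimedean R]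
    {s : Set M} (hs : IsUpperSet s) (hne : s.Nonempty) {f : M →+ R} (hf : BddBelow (f '' s))
    {x : M} (hx : 0 ≤ x) : 0 ≤ f x := by
  by_contra! hneg
  obtain ⟨a, ha⟩ := hne
  obtain ⟨c, hc⟩ := hf
  obtain ⟨k, hk⟩ := exists_lt_nsmul (neg_pos.2 hneg) (f a - c)
  have hmem : a + k • x ∈ s := hs (le_add_of_nonneg_right (nsmul_nonneg hx k)) ha
  have hle : c ≤ f a + k • f x := by
    simpa only [map_add, map_nsmul] using hc (Set.mem_image_of_mem f hmem)
  rw [smul_neg, sub_lt_iff_lt_add, lt_neg_add_iff_add_lt, add_comm] at hk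
  exact hle.not_gt hk

lemma isUpperSet_exponentSet {R σ : Type*} [CommSemiring R] (I : Ideal (MvPolynomial σ R)) :
    IsUpperSet (exponentSet I) := by
  intro a b hab ha
  obtain ⟨d, rfl⟩ := exists_add_of_le hab
  have hmul : monomial (a + d) (1 : R) = monomial d 1 * monomial a 1 := by
    rw [monomial_mul, one_mul, add_comm]
  change monomial (a + d) (1 : R) ∈ I
  exact hmul ▸ I.mul_mem_left _ ha

section NewtonPolyhedron

variable {n : ℕ}

lemma expVec_mono : Monotone (expVec (n := n)) :=
  fun _ _ h i => Nat.cast_le.2 (h i)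

lemma expVec_single_one (i : Fin n) : expVec (Finsupp.single i 1) = Pi.single i 1 := by
  ext j
  simp [expVec, Finsupp.single_apply, Pi.single_apply, eq_comm]

variable {K : Type*} [Field K] {I : Ideal (MvPolynomial (Fin n) K)} {u : Fin n → ℝ}

lemma newtonPolyhedron_eq_convexHull_image (I : Ideal (MvPolynomial (Fin n) K)) :
    newtonPolyhedron I = convexHull ℝ (expVec '' exponentSet I) := by
  simp only [newtonPolyhedron, Set.image, exponentSet, Set.mem_ofPred_eq, eq_comm]

lemma newtonPolyhedron_nonempty_iff :
    (newtonPolyhedron I).Nonempty ↔ (exponentSet I).Nonempty := by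
  rw [newtonPolyhedron_eq_convexHull_image, convexHull_nonempty_iff, Set.image_nonempty]

lemma exists_mem_extremePoints_newtonPolyhedron_forall_dotR_le
    (hne : (newtonPolyhedron I).Nonempty) (hu : ∀ i, 0 ≤ u i) :
    ∃ w ∈ (newtonPolyhedron I).extremePoints ℝ, ∀ v ∈ newtonPolyhedron I, dotR u w ≤ dotR u v := by
  have hpwo : (expVec '' exponentSet I).IsPWO :=
    (Set.isPWO_of_wellQuasiOrderedLE _).image_of_monotone expVec_mono
  have hmono : Monotone (dotProductBilin ℝ ℝ u) :=
    fun _ _ h => dotProduct_le_dotProduct_of_nonneg_left h hu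
  rw [newtonPolyhedron_eq_convexHull_image]
  exact exists_mem_extremePoints_forall_map_le_of_isPWO hpwo
    ((newtonPolyhedron_nonempty_iff.1 hne).image _) hmono

lemma nonneg_of_forall_mem_newtonPolyhedron_le_dotR {c : ℝ} (hne : (newtonPolyhedron I).Nonempty)
    (h : ∀ v ∈ newtonPolyhedron I, c ≤ dotR u v) (i : Fin n) : 0 ≤ u i := by
  let f : (Fin n →₀ ℕ) →+ ℝ := AddMonoidHom.mk' (fun a => dotR u (expVec a)) fun a b =>
    (congrArg (dotR u) (expVec_add a b)).trans (dotProduct_add u _ _)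
  have hf : BddBelow (f '' exponentSet I) := by
    refine ⟨c, Set.forall_mem_image.2 fun a ha => h _ ?_⟩
    rw [newtonPolyhedron_eq_convexHull_image]
    exact subset_convexHull ℝ _ (Set.mem_image_of_mem expVec ha)
  have hfi : f (Finsupp.single i 1) = u i :=
    (congrArg (dotR u) (expVec_single_one i)).trans (dotProduct_single_one u i)
  exact hfi ▸ map_nonneg_of_isUpperSet_of_bddBelow (isUpperSet_exponentSet I)
    (newtonPolyhedron_nonempty_iff.1 hne) hf zero_le

end NewtonPolyhedron

theorem stmt7_general {K : Type*} [Field K] {n : ℕ} (I : Ideal (MvPolynomial (Fin n) K))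
    (u : Fin n → ℝ) (c : ℝ) :
    IsSupp (newtonPolyhedron I) u c ↔
      ((∀ i, 0 ≤ u i) ∧
       (∀ v ∈ Set.extremePoints ℝ (newtonPolyhedron I), c ≤ dotR u v) ∧
       ∃ v ∈ Set.extremePoints ℝ (newtonPolyhedron I), dotR u v = c) := by
  constructor
  · rintro ⟨hle, v, hv, hvc⟩
    have hu := nonneg_of_forall_mem_newtonPolyhedron_le_dotR ⟨v, hv⟩ hle
    obtain ⟨w, hw, hmin⟩ := exists_mem_extremePoints_newtonPolyhedron_forall_dotR_le ⟨v, hv⟩ hu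
    exact ⟨hu, fun x hx => hle x hx.1, w, hw, ((hmin v hv).trans_eq hvc).antisymm (hle w hw.1)⟩
  · rintro ⟨hu, hle, w, hw, hwc⟩
    obtain ⟨x, hx, hmin⟩ :=
      exists_mem_extremePoints_newtonPolyhedron_forall_dotR_le ⟨w, hw.1⟩ hu
    exact ⟨fun v hv => (hle x hx).trans (hmin v hv), w, hw.1, hwc⟩

theorem stmt7 {K : Type*} [Field K] {n : ℕ} (I : Ideal (MvPolynomial (Fin n) K))
    (hI : IsMonomialIdeal I) (hne : I ≠ ⊥) (u : Fin n → ℝ) (hu : u ≠ 0) (c : ℝ) :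
    IsSupp (newtonPolyhedron I) u c ↔
      ((∀ i, 0 ≤ u i) ∧
       (∀ v ∈ Set.extremePoints ℝ (newtonPolyhedron I), c ≤ dotR u v) ∧
       ∃ v ∈ Set.extremePoints ℝ (newtonPolyhedron I), dotR u v = c) :=
  stmt7_general I u c
end
end

section
/- Let J = (x^{a_1},…,x^{a_r}) ⊆ A = K[x_1,…,x_n] be an extremal monomial ideal, i.e. ext(J) = {a_1,…,a_r}, with π_F as in the context. Suppose that for each compact face F of conv(J) a polynomial g_F ∈ T = K[y_1,…,y_r] is given, such that π_G(g_F) = π_G(g_G) for all compact faces G ⊆ F of conv(J). Then there exists a single polynomial g ∈ T with π_F(g) = π_F(g_F) for every compact face F of conv(J). (This is the surjectivity of the natural map onto the inverse limit lim_{F ∈ F_c} K[F], which together with Rad(D) = ⋂_F ker(π_F) identifies the reduced fiber ring F(J)_red with this inverse limit.) -/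
open MvPolynomial Pointwise

attribute [local instance] Classical.propDecidable

noncomputable section

/-- The `K`-algebra map `π_F : K[y_1,…,y_r] → A[t]` sending `y_j` to `x^{a_j}·t` if the
exponent `a_j` lies on the face `F`, and to `0` otherwise. -/
def piF {K : Type*} [Field K] {n r : ℕ} (a : Fin r → (Fin n →₀ ℕ)) (F : Set (Fin n → ℝ)) :
    MvPolynomial (Fin r) K →ₐ[K] Polynomial (MvPolynomial (Fin n) K) :=
  aeval (fun p => if expVec (a p) ∈ F
    then Polynomial.C (monomial (a p) (1 : K)) * Polynomial.X else 0)

/-- The defining property of the ideal `D ⊆ T = K[y_1,…,y_r]`, the kernel of the natural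
surjection `T → F(J) = ⊕_d J^d/(x_1,…,x_n)J^d`: a polynomial `g` lies in `D` iff for each
`d ≥ 0` the evaluation of its degree-`d` homogeneous component at `(x^{a_1},…,x^{a_r})`
lies in `(x_1,…,x_n)·J^d`. -/
def IsFiberKernel {K : Type*} [Field K] {n r : ℕ} (a : Fin r → (Fin n →₀ ℕ))
    (J : Ideal (MvPolynomial (Fin n) K)) (D : Ideal (MvPolynomial (Fin r) K)) : Prop :=
  ∀ g : MvPolynomial (Fin r) K, g ∈ D ↔
    ∀ d : ℕ, aeval (fun p => (monomial (a p) (1 : K) : MvPolynomial (Fin n) K))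
        (homogeneousComponent d g) ∈ maxIdeal K n * J ^ d

/-!
Gluing. Adding to `h` the part of `g_F - h` supported on the monomials of `F` makes `h` correct on
`F`, and on another face `G` it adds `π_{F ∩ G}(g_F - h)`. This vanishes if `h` is already correct
on `G`, because `ker π_G ⊆ ker π_{F ∩ G}` and `π_{F ∩ G}(g_F) = π_{F ∩ G}(g_G)`. Since there are
finitely many compact faces, repeating the correction gives the polynomial sought.

Kernels. If `F` is cut out by `⟨u, v⟩ = c`, a monomial of `T` mapped to `x^b t^d` is supported on
`F` exactly when `⟨u, b⟩ = d c`. So `π_{F ∩ G}(p)` is the part of `π_G(p)` in those bidegrees.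

Overlaps. If `F ∩ G` is nonempty, it is a compact face and the two polynomials agree there by
compatibility. If it is empty, the claim is that the constant terms agree, which holds because the
complex of compact faces is connected: the compact faces are the faces on which a functional with
positive coefficients is minimal, these functionals form a connected set, and a small change of the
functional can only shrink the face.
-/

/-- The face of `C` on which the linear functional `⟨u, ·⟩` attains its minimum over `C`. It is
empty when the minimum is not attained, and it is `C` itself for `u = 0`. -/
def minFace {n : ℕ} (C : Set (Fin n → ℝ)) (u : Fin n → ℝ) : Set (Fin n → ℝ) :=
  {v ∈ C | ∀ w ∈ C, dotR u v ≤ dotR u w}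

/-- The polyhedron `conv(S) + ℝ≥0^n`; for `S` the set of exponents of monomial generators of an
ideal it is the Newton polyhedron of that ideal. -/
def upperHull {n : ℕ} (S : Set (Fin n → ℝ)) : Set (Fin n → ℝ) :=
  convexHull ℝ S + Set.Ici 0

/-- The endomorphism of `K[y_1,…,y_r]` killing the variables `y_j` with `a_j ∉ F` and fixing the
others, used to correct a polynomial on the face `F`. -/
def faceRestrict {K : Type*} [Field K] {n r : ℕ} (a : Fin r → (Fin n →₀ ℕ))
    (F : Set (Fin n → ℝ)) : MvPolynomial (Fin r) K →ₐ[K] MvPolynomial (Fin r) K :=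
  aeval fun j => if expVec (a j) ∈ F then X j else 0

section Faces

variable {n : ℕ} {C F G S : Set (Fin n → ℝ)} {u v w : Fin n → ℝ}

theorem dotR_eq_dotProduct (u v : Fin n → ℝ) : dotR u v = u ⬝ᵥ v := rfl

theorem minFace_subset (C : Set (Fin n → ℝ)) (u : Fin n → ℝ) : minFace C u ⊆ C :=
  Set.sep_subset _ _

theorem minFace_zero (C : Set (Fin n → ℝ)) : minFace C 0 = C := by
  simp [minFace, dotR]

theorem minFace_eq_of_mem (hv : v ∈ minFace C u) :
    minFace C u = {w ∈ C | dotR u w = dotR u v} := by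
  ext w
  refine and_congr_right fun hw => ⟨fun h => (h v hv.1).antisymm (hv.2 w hw), fun h => ?_⟩
  exact h ▸ hv.2

theorem isProperFace_iff :
    IsProperFace C F ↔ (∃ u, F = minFace C u) ∧ F.Nonempty ∧ F ≠ C := by
  constructor
  · rintro ⟨u, c, -, ⟨hle, v, hv, rfl⟩, rfl, hne⟩
    exact ⟨⟨u, (minFace_eq_of_mem ⟨hv, hle⟩).symm⟩, ⟨v, hv, rfl⟩, hne⟩
  · rintro ⟨⟨u, rfl⟩, ⟨v, hv⟩, hne⟩
    refine ⟨u, dotR u v, ?_, ⟨hv.2, v, hv.1, rfl⟩, minFace_eq_of_mem hv, hne⟩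
    rintro rfl
    exact hne (minFace_zero C)

theorem minFace_add_eq_inter (h : (minFace C u ∩ minFace C w).Nonempty) :
    minFace C (u + w) = minFace C u ∩ minFace C w := by
  obtain ⟨v, hu, hw⟩ := h
  have hv : v ∈ minFace C (u + w) := by
    refine ⟨hu.1, fun x hx => ?_⟩
    simpa only [dotR_eq_dotProduct, add_dotProduct] using add_le_add (hu.2 x hx) (hw.2 x hx)
  rw [minFace_eq_of_mem hv, minFace_eq_of_mem hu, minFace_eq_of_mem hw]
  ext x
  simp only [dotR_eq_dotProduct, add_dotProduct, Set.mem_inter_iff, Set.mem_ofPred_eq]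
  constructor
  · rintro ⟨hx, h⟩
    have hux : u ⬝ᵥ v ≤ u ⬝ᵥ x := hu.2 x hx
    have hwx : w ⬝ᵥ v ≤ w ⬝ᵥ x := hw.2 x hx
    exact ⟨⟨hx, by linarith⟩, hx, by linarith⟩
  · rintro ⟨⟨hx, hux⟩, -, hwx⟩
    exact ⟨hx, by rw [hux, hwx]⟩

theorem IsProperFace.inter (hF : IsProperFace C F) (hG : IsProperFace C G)
    (h : (F ∩ G).Nonempty) : IsProperFace C (F ∩ G) := by
  rw [isProperFace_iff] at hF hG ⊢
  obtain ⟨⟨u, rfl⟩, -, hne⟩ := hF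
  obtain ⟨⟨w, rfl⟩, -, -⟩ := hG
  refine ⟨⟨u + w, (minFace_add_eq_inter h).symm⟩, h, fun hC => hne ?_⟩
  exact (minFace_subset C u).antisymm (hC.symm.trans_subset Set.inter_subset_left)

theorem IsCompactFace.inter (hF : IsCompactFace C F) (hG : IsCompactFace C G)
    (h : (F ∩ G).Nonempty) : IsCompactFace C (F ∩ G) :=
  ⟨hF.1.inter hG.1 h, hF.2.inter hG.2⟩

theorem minFace_add (S T : Set (Fin n → ℝ)) (u : Fin n → ℝ) :
    minFace (S + T) u = minFace S u + minFace T u := by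
  refine Set.Subset.antisymm ?_ ?_
  · rintro _ ⟨⟨s, hs, t, ht, rfl⟩, hmin⟩
    refine ⟨s, ⟨hs, fun s' hs' => ?_⟩, t, ⟨ht, fun t' ht' => ?_⟩, rfl⟩
    · simpa [dotR_eq_dotProduct] using hmin _ (Set.add_mem_add hs' ht)
    · simpa [dotR_eq_dotProduct] using hmin _ (Set.add_mem_add hs ht')
  · rintro _ ⟨s, hs, t, ht, rfl⟩
    refine ⟨Set.add_mem_add hs.1 ht.1, ?_⟩
    rintro _ ⟨s', hs', t', ht', rfl⟩
    simpa only [dotR_eq_dotProduct, dotProduct_add] using add_le_add (hs.2 s' hs') (ht.2 t' ht')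

theorem minFace_Ici_zero (hu : ∀ i, 0 < u i) : minFace (Set.Ici 0) u = {0} := by
  refine Set.eq_singleton_iff_unique_mem.2 ⟨⟨Set.self_mem_Ici, fun w hw => ?_⟩, fun v hv => ?_⟩
  · simpa [dotR] using Finset.sum_nonneg fun i _ => mul_nonneg (hu i).le (hw i)
  · have hnonneg : ∀ i ∈ Finset.univ, 0 ≤ u i * v i := fun i _ => mul_nonneg (hu i).le (hv.1 i)
    have hsum : ∑ i, u i * v i = 0 :=
      le_antisymm (by simpa [dotR] using hv.2 0 Set.self_mem_Ici) (Finset.sum_nonneg hnonneg)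
    ext i
    exact (mul_eq_zero.1 ((Finset.sum_eq_zero_iff_of_nonneg hnonneg).1 hsum i
      (Finset.mem_univ i))).resolve_left (hu i).ne'

theorem convex_setOf_le_dotR (u : Fin n → ℝ) (c : ℝ) : Convex ℝ {v | c ≤ dotR u v} :=
  convex_halfSpace_ge ⟨dotProduct_add u, fun t v => dotProduct_smul t u v⟩ c

theorem minFace_convexHull (S : Set (Fin n → ℝ)) (u : Fin n → ℝ) :
    minFace (convexHull ℝ S) u = convexHull ℝ (minFace S u) := by
  refine Set.Subset.antisymm ?_ (convexHull_min ?_ ?_)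
  · rintro v ⟨hv, hmin⟩
    obtain ⟨ι, _, c, z, hc, hc_sum, hz, rfl⟩ := mem_convexHull_iff_exists_fintype.1 hv
    set v := ∑ i, c i • z i with hv_def
    have hle (i : ι) : dotR u v ≤ dotR u (z i) := hmin _ (subset_convexHull ℝ S (hz i))
    have hsum : ∑ i, c i * (dotR u (z i) - dotR u v) = 0 := by
      simp only [mul_sub, Finset.sum_sub_distrib, ← Finset.sum_mul, hc_sum, one_mul]
      simp [hv_def, dotR_eq_dotProduct, dotProduct_sum, dotProduct_smul]
    have hmem (i : ι) (hi : c i ≠ 0) : z i ∈ minFace S u := by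
      have h := (Finset.sum_eq_zero_iff_of_nonneg
        fun i _ => mul_nonneg (hc i) (sub_nonneg.2 (hle i))).1 hsum i (Finset.mem_univ i)
      have hzi : dotR u (z i) = dotR u v := sub_eq_zero.1 ((mul_eq_zero.1 h).resolve_left hi)
      exact ⟨hz i, fun s hs => hzi ▸ hmin s (subset_convexHull ℝ S hs)⟩
    rw [hv_def, ← finsum_eq_sum_of_fintype]
    exact (convex_convexHull ℝ _).finsum_mem hc (by rwa [finsum_eq_sum_of_fintype])
      fun i hi => subset_convexHull ℝ _ (hmem i hi)
  · exact fun v hv => ⟨subset_convexHull ℝ S hv.1,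
      fun w hw => convexHull_min hv.2 (convex_setOf_le_dotR u _) hw⟩
  · intro v hv w hw s t hs ht hst
    refine ⟨convex_convexHull ℝ S hv.1 hw.1 hs ht hst, fun x hx => ?_⟩
    have hvx : u ⬝ᵥ v ≤ u ⬝ᵥ x := hv.2 x hx
    have hwx : u ⬝ᵥ w ≤ u ⬝ᵥ x := hw.2 x hx
    simp only [dotR_eq_dotProduct, dotProduct_add, dotProduct_smul, smul_eq_mul]
    calc s * (u ⬝ᵥ v) + t * (u ⬝ᵥ w) ≤ s * (u ⬝ᵥ x) + t * (u ⬝ᵥ x) := by gcongr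
      _ = u ⬝ᵥ x := by rw [← add_mul, hst, one_mul]

theorem eventually_minFace_subset (hS : S.Finite) (u : Fin n → ℝ) :
    ∀ᶠ w in nhds u, minFace S w ⊆ minFace S u := by
  have hcont (v : Fin n → ℝ) : Continuous fun w => dotR w v := by
    unfold dotR
    fun_prop
  have hlt : ∀ᶠ w in nhds u, ∀ v ∈ S, ∀ x ∈ S, dotR u x < dotR u v → dotR w x < dotR w v := by
    simp only [Filter.eventually_all_finite hS, Filter.eventually_imp_distrib_left]
    exact fun v _ x _ h => (isOpen_lt (hcont x) (hcont v)).mem_nhds h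
  filter_upwards [hlt] with w hw v hv
  exact ⟨hv.1, fun x hx => not_lt.1 fun h => (hv.2 x hx).not_gt (hw v hv.1 x hx h)⟩

theorem IsCompactFace.exists_pos (hC : IsUpperSet C) (hF : IsCompactFace C F) :
    ∃ u, (∀ i, 0 < u i) ∧ F = minFace C u := by
  obtain ⟨⟨u, rfl⟩, ⟨v, hv⟩, -⟩ := isProperFace_iff.1 hF.1
  refine ⟨u, fun i => ?_, rfl⟩
  by_contra! hui
  -- Otherwise the face contains the ray from `v` in direction `e_i`.
  have hray (k : ℝ) (hk : 0 ≤ k) : v + Pi.single i k ∈ minFace C u := by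
    have hC_mem : v + Pi.single i k ∈ C :=
      hC (le_add_of_nonneg_right (Pi.single_nonneg.2 hk)) hv.1
    refine ⟨hC_mem, fun w hw => le_trans ?_ (hv.2 w hw)⟩
    simpa [dotR_eq_dotProduct] using mul_nonpos_of_nonpos_of_nonneg hui hk
  obtain ⟨B, hB⟩ := (hF.2.image (continuous_apply i)).bddAbove
  have hle := hB (Set.mem_image_of_mem _ (hray (|B - v i| + 1) (by positivity)))
  simp only [Pi.add_apply, Pi.single_eq_same] at hle
  linarith [le_abs_self (B - v i)]

theorem isUpperSet_upperHull (S : Set (Fin n → ℝ)) : IsUpperSet (upperHull S) :=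
  (isUpperSet_Ici 0).add_left

theorem subset_upperHull (S : Set (Fin n → ℝ)) : S ⊆ upperHull S :=
  (subset_convexHull ℝ S).trans (Set.subset_add_left _ Set.self_mem_Ici)

theorem minFace_upperHull (S : Set (Fin n → ℝ)) (hu : ∀ i, 0 < u i) :
    minFace (upperHull S) u = convexHull ℝ (minFace S u) := by
  rw [upperHull, minFace_add, minFace_Ici_zero hu, Set.singleton_zero, add_zero,
    minFace_convexHull]

theorem isCompactFace_minFace_upperHull [Nonempty (Fin n)] (hS : S.Finite) (hne : S.Nonempty)
    (hu : ∀ i, 0 < u i) : IsCompactFace (upperHull S) (minFace (upperHull S) u) := by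
  refine ⟨isProperFace_iff.2 ⟨⟨u, rfl⟩, ?_, fun h => ?_⟩, ?_⟩
  · obtain ⟨v, hv, hmin⟩ := Set.exists_min_image S (dotR u) hS hne
    rw [minFace_upperHull S hu]
    exact ⟨v, subset_convexHull ℝ _ ⟨hv, hmin⟩⟩
  · obtain ⟨i⟩ := ‹Nonempty (Fin n)›
    obtain ⟨v, hv⟩ : (upperHull S).Nonempty := hne.convexHull.add Set.nonempty_Ici
    have hv' : v + Pi.single i 1 ∈ minFace (upperHull S) u := by
      rw [h]
      exact isUpperSet_upperHull S (le_add_of_nonneg_right (Pi.single_nonneg.2 zero_le_one)) hv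
    have hle := hv'.2 v hv
    simp only [dotR_eq_dotProduct, dotProduct_add, dotProduct_single_one] at hle
    linarith [hu i]
  · rw [minFace_upperHull S hu]
    exact (hS.subset (minFace_subset S u)).isCompact_convexHull ℝ

theorem finite_setOf_isCompactFace_upperHull (hS : S.Finite) :
    {F | IsCompactFace (upperHull S) F}.Finite := by
  refine (hS.finite_subsets.image (convexHull ℝ)).subset fun F hF => ?_
  obtain ⟨u, hu, rfl⟩ := hF.exists_pos (isUpperSet_upperHull S)
  exact ⟨minFace S u, minFace_subset S u, (minFace_upperHull S hu).symm⟩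

theorem convex_setOf_forall_pos (n : ℕ) : Convex ℝ {u : Fin n → ℝ | ∀ i, 0 < u i} := by
  simpa only [Set.pi, Set.mem_univ, true_imp_iff, Set.mem_Ioi] using
    convex_pi (s := Set.univ) fun _ _ => convex_Ioi (0 : ℝ)

theorem eq_of_isCompactFace_upperHull {α : Type*} (hS : S.Finite) (f : Set (Fin n → ℝ) → α)
    (hf : ∀ F G, IsCompactFace (upperHull S) F → IsCompactFace (upperHull S) G → G ⊆ F →
      f F = f G)
    (hF : IsCompactFace (upperHull S) F) (hG : IsCompactFace (upperHull S) G) : f F = f G := by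
  have hn : Nonempty (Fin n) := by
    obtain ⟨⟨u, -, hu, -⟩, -⟩ := hF
    exact (Function.ne_iff.1 hu).nonempty
  have hne : S.Nonempty := by
    rw [Set.nonempty_iff_ne_empty]
    rintro rfl
    obtain ⟨⟨-, -, -, ⟨-, v, hv, -⟩, -⟩, -⟩ := hF
    simp [upperHull] at hv
  obtain ⟨u, hu, rfl⟩ := hF.exists_pos (isUpperSet_upperHull S)
  obtain ⟨w, hw, rfl⟩ := hG.exists_pos (isUpperSet_upperHull S)
  refine (convex_setOf_forall_pos n).isPreconnected.induction₂
    (fun u w => f (minFace (upperHull S) u) = f (minFace (upperHull S) w))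
    (fun u hu => ?_) (fun _ _ _ _ _ _ => Eq.trans) (fun _ _ _ _ => Eq.symm) hu hw
  filter_upwards [nhdsWithin_le_nhds (eventually_minFace_subset hS u), self_mem_nhdsWithin]
    with w hsub hw
  refine hf _ _ (isCompactFace_minFace_upperHull hS hne hu)
    (isCompactFace_minFace_upperHull hS hne hw) ?_
  rw [minFace_upperHull S hu, minFace_upperHull S hw]
  exact convexHull_mono hsub

end Faces

theorem convexHull_range_natCast :
    convexHull ℝ (Set.range ((↑) : ℕ → ℝ)) = Set.Ici 0 := by
  refine (convexHull_min (Set.range_subset_iff.2 Nat.cast_nonneg) (convex_Ici 0)).antisymm ?_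
  intro x hx
  obtain ⟨k, hk⟩ := exists_nat_ge x
  have hmem (m : ℕ) : (m : ℝ) ∈ convexHull ℝ (Set.range ((↑) : ℕ → ℝ)) :=
    subset_convexHull ℝ _ ⟨m, rfl⟩
  exact (convex_convexHull ℝ _).ordConnected.out (hmem 0) (hmem k) ⟨Nat.cast_zero.trans_le hx, hk⟩

theorem convexHull_range_expVec (n : ℕ) :
    convexHull ℝ (Set.range (expVec (n := n))) = Set.Ici 0 := by
  have hrange : Set.range (expVec (n := n)) =
      Set.univ.pi fun _ => Set.range ((↑) : ℕ → ℝ) := by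
    ext v
    simp only [Set.mem_univ_pi, Set.mem_range]
    refine ⟨fun ⟨b, hb⟩ i => ⟨b i, congrFun hb i⟩, fun h => ?_⟩
    choose b hb using h
    exact ⟨Finsupp.equivFunOnFinite.symm b, funext hb⟩
  rw [hrange, convexHull_pi, ← Set.pi_univ_Ici]
  simp only [convexHull_range_natCast, Pi.zero_apply]

theorem newtonPolyhedron_span_monomial {K ι : Type*} [Field K] {n : ℕ} (a : ι → (Fin n →₀ ℕ)) :
    newtonPolyhedron (Ideal.span (Set.range fun i => monomial (a i) (1 : K))) =
      upperHull (Set.range fun i => expVec (a i)) := by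
  have hexp : {v | ∃ b : Fin n →₀ ℕ, monomial b (1 : K) ∈
        Ideal.span (Set.range fun i => monomial (a i) (1 : K)) ∧ v = expVec b} =
      Set.range (fun i => expVec (a i)) + Set.range (expVec (n := n)) := by
    have hmem (b : Fin n →₀ ℕ) : monomial b (1 : K) ∈
        Ideal.span (Set.range fun i => monomial (a i) (1 : K)) ↔ ∃ i c, b = a i + c := by
      have hrange : (Set.range fun i => monomial (a i) (1 : K)) =
          (fun s => monomial s (1 : K)) '' Set.range a :=
        Set.range_comp (fun s => monomial s (1 : K)) a
      rw [hrange, mem_ideal_span_monomial_image]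
      simp [support_monomial, le_iff_exists_add]
    ext v
    simp only [Set.mem_ofPred_eq, hmem, Set.mem_add, Set.exists_range_iff]
    constructor
    · rintro ⟨_, ⟨i, c, rfl⟩, rfl⟩
      exact ⟨i, c, by ext; simp [expVec]⟩
    · rintro ⟨i, c, rfl⟩
      exact ⟨_, ⟨i, c, rfl⟩, by ext; simp [expVec]⟩
  rw [newtonPolyhedron, hexp, convexHull_add, convexHull_range_expVec, upperHull]

section FaceMaps

variable {K : Type*} [Field K] {n r : ℕ} (a : Fin r → (Fin n →₀ ℕ))

theorem piF_faceRestrict (F G : Set (Fin n → ℝ)) (p : MvPolynomial (Fin r) K) :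
    piF a G (faceRestrict a F p) = piF a (F ∩ G) p := by
  have h : (piF (K := K) a G).comp (faceRestrict a F) = piF a (F ∩ G) := by
    ext j : 1
    by_cases hF : expVec (a j) ∈ F <;> simp [piF, faceRestrict, hF]
  exact DFunLike.congr_fun h p

theorem piF_monomial (F : Set (Fin n → ℝ)) (m : Fin r →₀ ℕ) (k : K) :
    piF a F (monomial m k) = if ∀ j ∈ m.support, expVec (a j) ∈ F then
      Polynomial.monomial m.degree (monomial (Finsupp.weight a m) k) else 0 := by
  rw [piF, aeval_monomial, Finsupp.prod]
  split_ifs with h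
  · have hprod : ∏ j ∈ m.support, (if expVec (a j) ∈ F then
          Polynomial.C (monomial (a j) (1 : K)) * Polynomial.X else 0) ^ m j =
        Polynomial.C (monomial (Finsupp.weight a m) 1) * Polynomial.X ^ m.degree := by
      rw [Finset.prod_congr rfl fun j hj => by rw [if_pos (h j hj)]]
      simp only [mul_pow, Finset.prod_mul_distrib, Finset.prod_pow_eq_pow_sum,
        ← Polynomial.C_pow, monomial_pow, one_pow, ← map_prod, ← monomial_sum_one,
        Finsupp.weight_apply, Finsupp.sum, Finsupp.degree_apply]
    rw [hprod, Polynomial.C_mul_X_pow_eq_monomial, Polynomial.algebraMap_apply, algebraMap_eq,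
      Polynomial.C_mul_monomial, C_mul_monomial, mul_one]
  · push Not at h
    obtain ⟨j, hj, hjF⟩ := h
    rw [Finset.prod_eq_zero hj, mul_zero]
    rw [if_neg hjF, zero_pow (Finsupp.mem_support_iff.1 hj)]

theorem coeff_piF_monomial (F : Set (Fin n → ℝ)) (m : Fin r →₀ ℕ) (k : K) (d : ℕ)
    (b : Fin n →₀ ℕ) : ((piF a F (monomial m k)).coeff d).coeff b =
      if (∀ j ∈ m.support, expVec (a j) ∈ F) ∧ m.degree = d ∧ Finsupp.weight a m = b
        then k else 0 := by
  rw [piF_monomial, ite_and, ite_and]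
  split_ifs with _ hd hb <;> simp [Polynomial.coeff_monomial, coeff_monomial, *]

theorem dotR_expVec_weight (u : Fin n → ℝ) (m : Fin r →₀ ℕ) :
    dotR u (expVec (Finsupp.weight a m)) = ∑ j ∈ m.support, m j * dotR u (expVec (a j)) := by
  have h : expVec (Finsupp.weight a m) = ∑ j ∈ m.support, (m j : ℝ) • expVec (a j) := by
    ext i
    simp [expVec, Finsupp.weight_apply, Finsupp.sum, Finsupp.finsetSum_apply]
  simp [h, dotR_eq_dotProduct, dotProduct_sum, dotProduct_smul]

variable {a} {u : Fin n → ℝ} {c : ℝ}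

theorem dotR_expVec_weight_eq_iff (hle : ∀ j, c ≤ dotR u (expVec (a j))) (m : Fin r →₀ ℕ) :
    dotR u (expVec (Finsupp.weight a m)) = m.degree * c ↔
      ∀ j ∈ m.support, dotR u (expVec (a j)) = c := by
  have hsum : dotR u (expVec (Finsupp.weight a m)) - m.degree * c =
      ∑ j ∈ m.support, m j * (dotR u (expVec (a j)) - c) := by
    simp [dotR_expVec_weight, Finsupp.degree_apply, mul_sub, Finset.sum_mul]
  rw [← sub_eq_zero, hsum, Finset.sum_eq_zero_iff_of_nonneg
    fun j _ => mul_nonneg (Nat.cast_nonneg _) (sub_nonneg.2 (hle j))]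
  refine forall₂_congr fun j hj => ?_
  simp [Finsupp.mem_support_iff.1 hj, sub_eq_zero]

variable {F : Set (Fin n → ℝ)}

theorem coeff_piF_inter (hle : ∀ j, c ≤ dotR u (expVec (a j)))
    (hF : ∀ j, expVec (a j) ∈ F ↔ dotR u (expVec (a j)) = c) (G : Set (Fin n → ℝ))
    (p : MvPolynomial (Fin r) K) (d : ℕ) (b : Fin n →₀ ℕ) :
    ((piF a (F ∩ G) p).coeff d).coeff b =
      if dotR u (expVec b) = d * c then ((piF a G p).coeff d).coeff b else 0 := by
  induction p using MvPolynomial.induction_on' with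
  | monomial m k =>
    have hface : (∀ j ∈ m.support, expVec (a j) ∈ F ∩ G) ↔
        dotR u (expVec (Finsupp.weight a m)) = m.degree * c ∧
          ∀ j ∈ m.support, expVec (a j) ∈ G := by
      simp only [dotR_expVec_weight_eq_iff hle, Set.mem_inter_iff, hF, forall_and]
    simp only [coeff_piF_monomial, ← ite_and]
    congr 1
    rw [hface, and_assoc, eq_iff_iff]
    refine and_congr_left ?_
    rintro ⟨-, rfl, rfl⟩
    rfl
  | add p q hp hq =>
    simp only [map_add, Polynomial.coeff_add, coeff_add, hp, hq]
    split_ifs <;> simp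

theorem piF_inter_congr (hle : ∀ j, c ≤ dotR u (expVec (a j)))
    (hF : ∀ j, expVec (a j) ∈ F ↔ dotR u (expVec (a j)) = c) {G : Set (Fin n → ℝ)}
    {p q : MvPolynomial (Fin r) K} (h : piF a G p = piF a G q) :
    piF a (F ∩ G) p = piF a (F ∩ G) q := by
  ext d b
  rw [coeff_piF_inter hle hF, coeff_piF_inter hle hF, h]

theorem piF_empty_congr {G : Set (Fin n → ℝ)} {p q : MvPolynomial (Fin r) K}
    (h : piF a G p = piF a G q) : piF a ∅ p = piF a ∅ q := by
  rw [← Set.empty_inter G]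
  -- The empty set is the face cut out by `⟨0, v⟩ = -1`.
  exact piF_inter_congr (u := 0) (c := -1) (by simp [dotR]) (by simp [dotR]) h

protected theorem IsProperFace.piF_inter_congr {C : Set (Fin n → ℝ)} (hF : IsProperFace C F)
    (ha : ∀ j, expVec (a j) ∈ C) {G : Set (Fin n → ℝ)} {p q : MvPolynomial (Fin r) K}
    (h : piF a G p = piF a G q) : piF a (F ∩ G) p = piF a (F ∩ G) q := by
  obtain ⟨u, c, -, ⟨hle, -⟩, rfl, -⟩ := hF
  exact piF_inter_congr (fun j => hle _ (ha j)) (fun j => and_iff_right (ha j)) h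

theorem exists_forall_piF_eq {s : Set (Set (Fin n → ℝ))} (hs : s.Finite)
    (g : Set (Fin n → ℝ) → MvPolynomial (Fin r) K)
    (hker : ∀ F ∈ s, ∀ G ∈ s, ∀ p q : MvPolynomial (Fin r) K,
      piF a G p = piF a G q → piF a (F ∩ G) p = piF a (F ∩ G) q)
    (hg : ∀ F ∈ s, ∀ G ∈ s, piF a (F ∩ G) (g F) = piF a (F ∩ G) (g G)) :
    ∃ h : MvPolynomial (Fin r) K, ∀ F ∈ s, piF a F h = piF a F (g F) := by
  induction s, hs using Set.Finite.induction_on with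
  | empty => exact ⟨0, by simp⟩
  | @insert F t _ _ ih =>
    obtain ⟨h, hh⟩ := ih (fun G hG H hH => hker G (.inr hG) H (.inr hH))
      fun G hG H hH => hg G (.inr hG) H (.inr hH)
    have hcorrect (G : Set (Fin n → ℝ)) : piF a G (h + faceRestrict a F (g F - h)) =
        piF a G h + (piF a (F ∩ G) (g F) - piF a (F ∩ G) h) := by
      rw [map_add, piF_faceRestrict, map_sub]
    refine ⟨h + faceRestrict a F (g F - h), ?_⟩
    rintro G (rfl | hG)
    · rw [hcorrect, Set.inter_self, add_sub_cancel]
    · rw [hcorrect, hker F (.inl rfl) G (.inr hG) h (g G) (hh G hG), hg F (.inl rfl) G (.inr hG),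
        sub_self, add_zero, hh G hG]

theorem piF_inter_eq_of_compatible {S : Set (Fin n → ℝ)} (hS : S.Finite)
    {g : Set (Fin n → ℝ) → MvPolynomial (Fin r) K}
    (hcomp : ∀ F G, IsCompactFace (upperHull S) F → IsCompactFace (upperHull S) G → G ⊆ F →
      piF a G (g F) = piF a G (g G))
    {G : Set (Fin n → ℝ)} (hF : IsCompactFace (upperHull S) F)
    (hG : IsCompactFace (upperHull S) G) :
    piF a (F ∩ G) (g F) = piF a (F ∩ G) (g G) := by
  rcases (F ∩ G).eq_empty_or_nonempty with hempty | hne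
  · rw [hempty]
    exact eq_of_isCompactFace_upperHull hS (fun F => piF a ∅ (g F))
      (fun F G hF hG hGF => piF_empty_congr (hcomp F G hF hG hGF)) hF hG
  · have hFG := hF.inter hG hne
    exact (hcomp F _ hF hFG Set.inter_subset_left).trans
      (hcomp G _ hG hFG Set.inter_subset_right).symm

end FaceMaps

theorem stmt16_general {K : Type*} [Field K] {n r : ℕ} (a : Fin r → (Fin n →₀ ℕ))
    (J : Ideal (MvPolynomial (Fin n) K))
    (hJ : J = Ideal.span (Set.range fun i => monomial (a i) (1 : K)))
    (g : Set (Fin n → ℝ) → MvPolynomial (Fin r) K)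
    (hcomp : ∀ F G, IsCompactFace (newtonPolyhedron J) F →
        IsCompactFace (newtonPolyhedron J) G → G ⊆ F →
        piF (K := K) a G (g F) = piF (K := K) a G (g G)) :
    ∃ h : MvPolynomial (Fin r) K, ∀ F, IsCompactFace (newtonPolyhedron J) F →
      piF (K := K) a F h = piF (K := K) a F (g F) := by
  have hfin : (Set.range fun j => expVec (a j)).Finite := Set.finite_range _
  have ha (j : Fin r) : expVec (a j) ∈ upperHull (Set.range fun j => expVec (a j)) :=
    subset_upperHull _ ⟨j, rfl⟩
  subst hJ
  rw [newtonPolyhedron_span_monomial] at hcomp ⊢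
  exact exists_forall_piF_eq (finite_setOf_isCompactFace_upperHull hfin) g
    (fun F hF _ _ _ _ => hF.1.piF_inter_congr ha)
    (fun F hF G hG => piF_inter_eq_of_compatible hfin hcomp hF hG)

theorem stmt16 {K : Type*} [Field K] {n r : ℕ} (a : Fin r → (Fin n →₀ ℕ))
    (J : Ideal (MvPolynomial (Fin n) K))
    (hJ : J = Ideal.span (Set.range fun i => monomial (a i) (1 : K)))
    (hext : Set.extremePoints ℝ (newtonPolyhedron J) = Set.range fun i => expVec (a i))
    (g : Set (Fin n → ℝ) → MvPolynomial (Fin r) K)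
    (hcomp : ∀ F G, IsCompactFace (newtonPolyhedron J) F →
        IsCompactFace (newtonPolyhedron J) G → G ⊆ F →
        piF (K := K) a G (g F) = piF (K := K) a G (g G)) :
    ∃ h : MvPolynomial (Fin r) K, ∀ F, IsCompactFace (newtonPolyhedron J) F →
      piF (K := K) a F h = piF (K := K) a F (g F) :=
  stmt16_general a J hJ g hcomp
end
end
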